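/- Fix δ₀, ρ₀ ∈ (0,1), set α₀ = (1−ρ₀)(1−δ₀)²/ρ₀ and β₀ = (1−ρ₀)(1−δ₀)/ρ₀, and for n ≥ 3 define t_n = δ₀√(2(1−ρ₀)log n) and ψ_n(s) = φ(s) · Φ((t_n − √ρ₀ s)/√(1−ρ₀))^n. Then there is a constant C > 0 depending only on (δ₀, ρ₀) such that for all sufficiently large n, ∫_{0}^{∞} ψ_n(s) ds ≤ C · n^{−α₀} · (log n)^{(β₀−1)/2}. -/

import Mathlib

open MeasureTheory Real Filter

/-- The standard normal density `φ`. -/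
noncomputable def stdNormalPDF (s : ℝ) : ℝ :=
  (Real.sqrt (2 * Real.pi))⁻¹ * Real.exp (-s ^ 2 / 2)

/-- The standard normal distribution function `Φ`. -/
noncomputable def stdNormalCDF (x : ℝ) : ℝ :=
  ∫ s in Set.Iic x, stdNormalPDF s

/-- `t_n = δ₀ √(2(1−ρ₀) log n)`. -/
noncomputable def tN (δ₀ ρ₀ : ℝ) (n : ℕ) : ℝ :=
  δ₀ * Real.sqrt (2 * (1 - ρ₀) * Real.log n)

/-- `ψ_n(s) = φ(s) · Φ((t_n − √ρ₀ s)/√(1−ρ₀))^n`. -/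
noncomputable def psiN (δ₀ ρ₀ : ℝ) (n : ℕ) (s : ℝ) : ℝ :=
  stdNormalPDF s *
    stdNormalCDF ((tN δ₀ ρ₀ n - Real.sqrt ρ₀ * s) / Real.sqrt (1 - ρ₀)) ^ n


lemma aux_pdf_eq : stdNormalPDF = ProbabilityTheory.gaussianPDFReal 0 1 := by
  funext s
  simp [stdNormalPDF, ProbabilityTheory.gaussianPDFReal]

lemma aux_int : Integrable stdNormalPDF := by
  rw [aux_pdf_eq]; exact ProbabilityTheory.integrable_gaussianPDFReal 0 1

lemma aux_total : ∫ s, stdNormalPDF s = 1 := by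
  rw [aux_pdf_eq]; exact ProbabilityTheory.integral_gaussianPDFReal_eq_one 0 (by simp)

lemma aux_nonneg (s : ℝ) : 0 ≤ stdNormalPDF s := by
  unfold stdNormalPDF; positivity

lemma aux_cdf_nonneg (x : ℝ) : 0 ≤ stdNormalCDF x :=
  integral_nonneg aux_nonneg

lemma aux_cdf_mono {x y : ℝ} (h : x ≤ y) : stdNormalCDF x ≤ stdNormalCDF y :=
  setIntegral_mono_set aux_int.integrableOn (Eventually.of_forall aux_nonneg)
    (Set.Iic_subset_Iic.2 h).eventuallyLE

lemma aux_cdf_le (x : ℝ) (hx : 0 ≤ x) : stdNormalCDF x ≤ 1 - stdNormalPDF (x + 1) := by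
  have h1 : stdNormalCDF x + ∫ s in Set.Ioi x, stdNormalPDF s = 1 := by
    rw [← aux_total, ← integral_add_compl (measurableSet_Iic (a := x)) aux_int, Set.compl_Iic]
    rfl
  have h2 : ∫ s in Set.Ioc x (x+1), stdNormalPDF s ≤ ∫ s in Set.Ioi x, stdNormalPDF s :=
    setIntegral_mono_set aux_int.integrableOn (Eventually.of_forall aux_nonneg)
      (Set.Ioc_subset_Ioi_self).eventuallyLE
  have h3 : ∫ _s in Set.Ioc x (x+1), stdNormalPDF (x+1)
      ≤ ∫ s in Set.Ioc x (x+1), stdNormalPDF s := by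
    apply setIntegral_mono_on _ aux_int.integrableOn measurableSet_Ioc
    · intro s hs
      unfold stdNormalPDF
      have : s ^ 2 ≤ (x+1)^2 := pow_le_pow_left₀ (hx.trans hs.1.le) hs.2 2
      gcongr
    · simp
  have h4 : ∫ _s in Set.Ioc x (x+1), stdNormalPDF (x+1) = stdNormalPDF (x+1) := by
    simp [Measure.real]
  linarith

lemma aux_asymp (δ c K : ℝ) (hδ : δ ∈ Set.Ioo (0 : ℝ) 1) (hc : 0 < c) :
    ∀ᶠ a : ℝ in atTop, K * (a ^ 2 / 2) ≤ c * exp (a ^ 2 / 2 - (δ * a + 1) ^ 2 / 2) := by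
  have h1 : ∀ᶠ a : ℝ in atTop, a ≤ a ^ 2 / 2 - (δ * a + 1) ^ 2 / 2 := by
    obtain ⟨h0, h1⟩ := hδ
    have hd : 0 < 1 - δ ^ 2 := by nlinarith
    filter_upwards [eventually_ge_atTop (5 / (1 - δ ^ 2)), eventually_ge_atTop 1] with a ha ha1
    rw [div_le_iff₀ hd] at ha
    nlinarith
  have h2 : (fun a : ℝ => a ^ 2) =o[atTop] exp := isLittleO_pow_exp_atTop
  have hK : 0 < 2 * c / (|K| + 1) := by positivity
  filter_upwards [h1, h2.bound hK] with a ha hb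
  rw [norm_of_nonneg (sq_nonneg a), norm_of_nonneg (exp_pos a).le] at hb
  have h3 : (|K| + 1) * a ^ 2 ≤ 2 * c * exp a := by
    rw [div_mul_eq_mul_div, le_div_iff₀ (by positivity)] at hb
    linarith
  have h4 : exp a ≤ exp (a ^ 2 / 2 - (δ * a + 1) ^ 2 / 2) := exp_le_exp.2 ha
  have h5 := mul_le_mul_of_nonneg_left h4 hc.le
  have h6 := mul_le_mul_of_nonneg_right (le_abs_self K) (sq_nonneg a)
  nlinarith [sq_nonneg a]

theorem psi_integral_right_half_line_upper_bound (δ₀ ρ₀ : ℝ)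
    (hδ : δ₀ ∈ Set.Ioo (0 : ℝ) 1) (hρ : ρ₀ ∈ Set.Ioo (0 : ℝ) 1) :
    ∃ C : ℝ, 0 < C ∧
      ∀ᶠ n : ℕ in atTop,
        ∫ s in Set.Ioi (0 : ℝ), psiN δ₀ ρ₀ n s
          ≤ C * (n : ℝ) ^ (-((1 - ρ₀) * (1 - δ₀) ^ 2 / ρ₀))
              * Real.log n ^ (((1 - ρ₀) * (1 - δ₀) / ρ₀ - 1) / 2) := by
  refine ⟨1, one_pos, ?_⟩
  obtain ⟨hr0, hr1⟩ := hρ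
  set α := (1 - ρ₀) * (1 - δ₀) ^ 2 / ρ₀ with hα
  have hβ : 0 ≤ (1 - ρ₀) * (1 - δ₀) / ρ₀ :=
    div_nonneg (mul_nonneg (by linarith) (by linarith [hδ.2])) hr0.le
  set β := (1 - ρ₀) * (1 - δ₀) / ρ₀
  have hlog : Tendsto (fun n : ℕ => Real.log n) atTop atTop :=
    tendsto_log_atTop.comp tendsto_natCast_atTop_atTop
  have ht : Tendsto (fun n : ℕ => √(2 * Real.log n)) atTop atTop :=
    tendsto_sqrt_atTop.comp (hlog.const_mul_atTop two_pos)
  have hc : 0 < (√(2 * π))⁻¹ := by positivity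
  filter_upwards [ht.eventually (aux_asymp δ₀ _ (α + 1) hδ hc),
    hlog.eventually (eventually_ge_atTop 1), eventually_ge_atTop 1] with n hn hl hn1
  have hnpos : (0 : ℝ) < n := by exact_mod_cast hn1
  set a := √(2 * Real.log n) with ha
  have ha2 : a ^ 2 / 2 = Real.log n := by
    rw [ha, sq_sqrt (by linarith)]; ring
  have ha0 : 0 ≤ a := sqrt_nonneg _
  have hs1 : 0 < √(1 - ρ₀) := sqrt_pos.2 (by linarith)
  have htn : tN δ₀ ρ₀ n / √(1 - ρ₀) = δ₀ * a := by
    have : 2 * (1 - ρ₀) * Real.log n = (1 - ρ₀) * (2 * Real.log n) := by ring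
    rw [tN, this, sqrt_mul (by linarith), ← ha]
    field_simp
  have hb : ∫ s in Set.Ioi (0 : ℝ), psiN δ₀ ρ₀ n s
      ≤ ∫ s in Set.Ioi (0 : ℝ), stdNormalPDF s * stdNormalCDF (δ₀ * a) ^ n := by
    apply integral_mono_of_nonneg
    · exact Eventually.of_forall fun s =>
        mul_nonneg (aux_nonneg s) (pow_nonneg (aux_cdf_nonneg _) n)
    · exact (aux_int.mul_const _).integrableOn
    · filter_upwards [ae_restrict_mem measurableSet_Ioi] with s hs
      have hs' : (0 : ℝ) < s := hs
      apply mul_le_mul_of_nonneg_left _ (aux_nonneg s)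
      apply pow_le_pow_left₀ (aux_cdf_nonneg _)
      apply aux_cdf_mono
      rw [← htn]
      gcongr
      have := mul_nonneg (sqrt_nonneg ρ₀) hs'.le
      linarith
  have hb2 : ∫ s in Set.Ioi (0 : ℝ), stdNormalPDF s ≤ 1 := by
    rw [← aux_total]
    exact setIntegral_le_integral aux_int (Eventually.of_forall aux_nonneg)
  rw [integral_mul_const] at hb
  have hb3 : stdNormalCDF (δ₀ * a) ^ n ≤ exp (-((α + 1) * Real.log n)) := by
    calc stdNormalCDF (δ₀ * a) ^ n ≤ (exp (-stdNormalPDF (δ₀ * a + 1))) ^ n := by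
          apply pow_le_pow_left₀ (aux_cdf_nonneg _)
          have := aux_cdf_le (δ₀ * a) (mul_nonneg hδ.1.le ha0)
          have := add_one_le_exp (-stdNormalPDF (δ₀ * a + 1))
          linarith
      _ = exp (-(n * stdNormalPDF (δ₀ * a + 1))) := by
          rw [← exp_nat_mul]; congr 1; ring
      _ ≤ _ := by
          apply exp_le_exp.2
          rw [sub_eq_add_neg, exp_add, ha2, exp_log hnpos] at hn
          unfold stdNormalPDF
          rw [neg_div]
          linarith
  have hb4 : exp (-((α + 1) * Real.log n)) ≤
      1 * (n : ℝ) ^ (-α) * Real.log n ^ ((β - 1) / 2) := by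
    have e : exp (-((α + 1) * Real.log n)) = (n : ℝ) ^ (-α) * (n : ℝ)⁻¹ := by
      rw [rpow_def_of_pos hnpos, ← exp_log (inv_pos.2 hnpos), log_inv, ← exp_add]
      congr 1; ring
    rw [e, one_mul]
    apply mul_le_mul_of_nonneg_left _ (by positivity)
    calc (n : ℝ)⁻¹ ≤ (Real.log n)⁻¹ := by
          apply inv_anti₀ (by linarith)
          linarith [log_le_sub_one_of_pos hnpos]
      _ = Real.log n ^ (-1 : ℝ) := (rpow_neg_one _).symm
      _ ≤ _ := rpow_le_rpow_of_exponent_le hl (by linarith)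
  calc _ ≤ _ := hb
    _ ≤ 1 * stdNormalCDF (δ₀ * a) ^ n :=
        mul_le_mul_of_nonneg_right hb2 (pow_nonneg (aux_cdf_nonneg _) n)
    _ ≤ _ := by rw [one_mul]; exact hb3
    _ ≤ _ := hb4
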